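/- arXiv:2105.05468 — 5 statements merged into one kernel-verified Lean document; each statement's English description precedes it below -/
import Mathlib

section
/- Let (X, 𝓑, μ) be a probability space equipped with a jointly measurable measure-preserving ℝ-flow (u_s)_{s∈ℝ}. Let φ : X → ℂ be a bounded measurable function, let ξ : ℝ → ℂ be measurable with |ξ(s)| = 1 for all s, and suppose there are constants C ≥ 1, c ∈ (0,1/2), λ > 0 and S ≥ 0 such that for all s ∈ ℝ: |∫_X φ(u_s x)·conj(φ(x)) dμ(x) − |∫_X φ dμ|²| ≤ C·max(1, |s|·λ)^{−c}·S². For L > 0 define φ_L(x) := (1/L)·∫₀^L ξ(s)·(φ(u_s x) − ∫_X φ dμ) ds. Then for every L > 0 with L·λ ≥ 1 one has ∫_X |φ_L|² dμ ≤ 14·C·(L·λ)^{−c}·S². -/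
open MeasureTheory

/-!
Put `m = ∫ φ` and `f s x = ξ s • (φ (u s x) - m)`. Expanding the square and applying Fubini, the
`L²` norm squared of `∫₀ᴸ f s ds` is the integral over `(s, t) ∈ [0, L]²` of the correlations
`∫ ⟪f s, f t⟫ dμ`. Since `μ` is invariant under `u s`, such a correlation is, up to the factor
`conj (ξ s) * ξ t`, the centered autocorrelation of `φ` at time `t - s`, hence at most
`k (t - s)` with `k r = C * max 1 (|r| * lam) ^ (-c)`. The double integral of `k (t - s)` is at
most `L * ∫ k` over `[-L, L]`, and `k r ≤ C * (|r| * lam) ^ (-c)` with `c < 1` bounds the integral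
of `k` by `2 / (1 - c) * L * C * (L * lam) ^ (-c)`. For `c < 1 / 2` the constant `2 / (1 - c)` is
below `4`.
-/

open scoped InnerProductSpace

section Hilbert

variable {𝕜 X T E : Type*} [RCLike 𝕜] [MeasurableSpace X] [MeasurableSpace T]
  [NormedAddCommGroup E] [InnerProductSpace 𝕜 E] {μ : Measure X} {ν : Measure T}

lemma integrable_inner_of_memLp {p q : ENNReal} [ENNReal.HolderConjugate p q] {f g : X → E}
    (hf : MemLp f p μ) (hg : MemLp g q μ) :
    Integrable (fun x => ⟪f x, g x⟫_𝕜) μ :=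
  memLp_one_iff_integrable.1 <|
    hf.of_bilin (fun a b => ⟪a, b⟫_𝕜) 1 hg (hf.1.inner hg.1)
      (ae_of_all _ fun x => by simpa using nnnorm_inner_le_nnnorm (𝕜 := 𝕜) (f x) (g x))

lemma norm_integral_inner_smul_smul_le {a b : 𝕜} (ha : ‖a‖ ≤ 1) (hb : ‖b‖ ≤ 1) (f g : X → E) :
    ‖∫ x, ⟪a • f x, b • g x⟫_𝕜 ∂μ‖ ≤ ‖∫ x, ⟪f x, g x⟫_𝕜 ∂μ‖ := by
  simp_rw [inner_smul_left, inner_smul_right]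
  rw [integral_const_mul, integral_const_mul, norm_mul, norm_mul, RCLike.norm_conj, ← mul_assoc]
  exact mul_le_of_le_one_left (norm_nonneg _) (mul_le_one₀ ha (norm_nonneg _) hb)

lemma integrable_inner_pair_of_memLp_two [IsFiniteMeasure ν] [SFinite μ] {f : T → X → E}
    (hf : MemLp f.uncurry 2 (ν.prod μ)) :
    Integrable (fun p : (T × T) × X => ⟪f p.1.1 p.2, f p.1.2 p.2⟫_𝕜) ((ν.prod ν).prod μ) := by
  have hsnd : MemLp (fun p : (T × T) × X => f p.1.2 p.2) 2 ((ν.prod ν).prod μ) :=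
    (hf.comp_snd ν).comp_measurePreserving (measurePreserving_prodAssoc ν ν μ)
  exact integrable_inner_of_memLp
    (hsnd.comp_measurePreserving (Measure.measurePreserving_swap.prod (.id μ))) hsnd

lemma ae_integrable_slice_of_memLp_two [IsFiniteMeasure ν] [SFinite μ] {f : T → X → E}
    (hf : MemLp f.uncurry 2 (ν.prod μ)) : ∀ᵐ x ∂μ, Integrable (fun s => f s x) ν := by
  filter_upwards [hf.1.prodMk_right, (hf.integrable_norm_pow two_ne_zero).prod_left_ae]
    with x hmeas hsq
  exact ((memLp_two_iff_integrable_sq_norm hmeas).2 hsq).integrable one_le_two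

variable [NormedSpace ℝ E] [CompleteSpace E]

lemma integral_inner_const_right {f : X → E} (hf : Integrable f μ) (c : E) :
    ∫ x, ⟪f x, c⟫_𝕜 ∂μ = ⟪∫ x, f x ∂μ, c⟫_𝕜 := by
  simp_rw [← inner_conj_symm _ c]
  rw [integral_conj, integral_inner hf]

lemma integral_prod_inner [SFinite μ] [SFinite ν] {f : X → E} {g : T → E}
    (hf : Integrable f μ) (hg : Integrable g ν) :
    ∫ z, ⟪f z.1, g z.2⟫_𝕜 ∂(μ.prod ν) = ⟪∫ x, f x ∂μ, ∫ t, g t ∂ν⟫_𝕜 := by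
  have hint : Integrable (fun z : X × T => ⟪f z.1, g z.2⟫_𝕜) (μ.prod ν) :=
    hf.op_fst_snd (op := fun a b => ⟪a, b⟫_𝕜) continuous_inner
      ⟨1, by simpa using norm_inner_le_norm (𝕜 := 𝕜)⟩ hg
  simp_rw [integral_prod _ hint, integral_inner hg]
  exact integral_inner_const_right hf _

lemma integral_norm_sq_integral_eq [IsFiniteMeasure ν] [SFinite μ] {f : T → X → E}
    (hf : MemLp f.uncurry 2 (ν.prod μ)) :
    ((∫ x, ‖∫ s, f s x ∂ν‖ ^ 2 ∂μ : ℝ) : 𝕜)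
      = ∫ z : T × T, ∫ x, ⟪f z.1 x, f z.2 x⟫_𝕜 ∂μ ∂(ν.prod ν) := by
  rw [integral_integral_swap (integrable_inner_pair_of_memLp_two hf), ← integral_ofReal]
  refine integral_congr_ae ?_
  filter_upwards [ae_integrable_slice_of_memLp_two hf] with x hx
  rw [integral_prod_inner hx hx, inner_self_eq_norm_sq_to_K, RCLike.ofReal_pow]

lemma integral_norm_sq_integral_le [IsFiniteMeasure ν] [SFinite μ] {f : T → X → E}
    (hf : MemLp f.uncurry 2 (ν.prod μ)) {G : T × T → ℝ} (hG : Integrable G (ν.prod ν))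
    (hfG : ∀ s t, ‖∫ x, ⟪f s x, f t x⟫_𝕜 ∂μ‖ ≤ G (s, t)) :
    ∫ x, ‖∫ s, f s x ∂ν‖ ^ 2 ∂μ ≤ ∫ z, G z ∂(ν.prod ν) :=
  calc ∫ x, ‖∫ s, f s x ∂ν‖ ^ 2 ∂μ
      ≤ ‖((∫ x, ‖∫ s, f s x ∂ν‖ ^ 2 ∂μ : ℝ) : 𝕜)‖ := by
        rw [RCLike.norm_ofReal]; exact le_abs_self _
    _ ≤ ∫ z, G z ∂(ν.prod ν) := by
        rw [integral_norm_sq_integral_eq hf]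
        exact norm_integral_le_of_norm_le hG (ae_of_all _ fun z => hfG z.1 z.2)

lemma integral_inner_sub_integral [IsProbabilityMeasure μ] {f g : X → E} (hf : MemLp f 2 μ)
    (hg : MemLp g 2 μ) :
    ∫ x, ⟪f x - ∫ y, f y ∂μ, g x - ∫ y, g y ∂μ⟫_𝕜 ∂μ
      = ∫ x, ⟪f x, g x⟫_𝕜 ∂μ - ⟪∫ x, f x ∂μ, ∫ x, g x ∂μ⟫_𝕜 := by
  have hf₁ : Integrable f μ := hf.integrable one_le_two
  have hg₁ : Integrable g μ := hg.integrable one_le_two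
  have hgc : MemLp (fun x => g x - ∫ y, g y ∂μ) 2 μ := hg.sub (memLp_const _)
  have hmean : ∫ x, (g x - ∫ y, g y ∂μ) ∂μ = 0 := by
    simp [integral_sub hg₁ (integrable_const _)]
  have hconst_left : ∫ x, ⟪∫ y, f y ∂μ, g x - ∫ y, g y ∂μ⟫_𝕜 ∂μ = 0 := by
    rw [integral_inner (hgc.integrable one_le_two), hmean, inner_zero_right]
  calc ∫ x, ⟪f x - ∫ y, f y ∂μ, g x - ∫ y, g y ∂μ⟫_𝕜 ∂μ
      = ∫ x, ⟪f x, g x - ∫ y, g y ∂μ⟫_𝕜 ∂μ := by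
        simp_rw [inner_sub_left (𝕜 := 𝕜) (f _)]
        rw [integral_sub (integrable_inner_of_memLp hf hgc)
          ((hgc.integrable one_le_two).const_inner _), hconst_left, sub_zero]
    _ = ∫ x, ⟪f x, g x⟫_𝕜 ∂μ - ⟪∫ x, f x ∂μ, ∫ x, g x ∂μ⟫_𝕜 := by
        simp_rw [inner_sub_right]
        rw [integral_sub (integrable_inner_of_memLp hf hg) (hf₁.inner_const _),
          integral_inner_const_right hf₁]

end Hilbert

section Kernel

lemma intervalIntegral_neg_self_of_even {E : Type*} [NormedAddCommGroup E] [NormedSpace ℝ E]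
    {f : ℝ → E} (hf : f.Even) {a : ℝ} (hi : IntervalIntegrable f volume 0 a) :
    ∫ r in -a..a, f r = 2 • ∫ r in (0 : ℝ)..a, f r := by
  have hneg : (fun r => f (-r)) = f := funext hf
  have hi' : IntervalIntegrable f volume (-a) 0 := by
    simpa [hneg] using (IntervalIntegrable.iff_comp_neg (f := f) (a := 0) (b := a)).1 hi |>.symm
  have hreflect : ∫ r in -a..0, f r = ∫ r in (0 : ℝ)..a, f r := by
    simpa [hneg] using (intervalIntegral.integral_comp_neg (a := 0) (b := a) f).symm
  rw [← intervalIntegral.integral_add_adjacent_intervals hi' hi, hreflect, two_nsmul]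

lemma integral_integral_comp_sub_le {k : ℝ → ℝ} (hk : Continuous k) (hk_nonneg : ∀ r, 0 ≤ k r)
    {L : ℝ} (hL : 0 ≤ L) :
    ∫ s in (0 : ℝ)..L, ∫ t in (0 : ℝ)..L, k (t - s) ≤ L * ∫ r in -L..L, k r := by
  have hcont : Continuous fun s => ∫ t in (0 : ℝ)..L, k (t - s) :=
    intervalIntegral.continuous_parametric_intervalIntegral_of_continuous' (by fun_prop) 0 L
  have hslice : ∀ s ∈ Set.Icc 0 L, ∫ t in (0 : ℝ)..L, k (t - s) ≤ ∫ r in -L..L, k r := by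
    rintro s ⟨hs₀, hsL⟩
    rw [intervalIntegral.integral_comp_sub_right k s]
    exact intervalIntegral.integral_mono_interval (by linarith) (by linarith) (by linarith)
      (ae_of_all _ hk_nonneg) (hk.intervalIntegrable _ _)
  calc ∫ s in (0 : ℝ)..L, ∫ t in (0 : ℝ)..L, k (t - s)
      ≤ ∫ _ in (0 : ℝ)..L, ∫ r in -L..L, k r :=
        intervalIntegral.integral_mono_on hL (hcont.intervalIntegrable _ _)
          intervalIntegrable_const hslice
    _ = L * ∫ r in -L..L, k r := by
        rw [intervalIntegral.integral_const, sub_zero, smul_eq_mul]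

lemma continuous_max_one_abs_mul_rpow (c lam : ℝ) :
    Continuous fun r : ℝ => max 1 (|r| * lam) ^ c :=
  Continuous.rpow_const (by fun_prop) fun _ =>
    Or.inl (zero_lt_one.trans_le (le_max_left _ _)).ne'

lemma integral_max_one_abs_mul_rpow_neg_le {c lam L : ℝ} (hc : c ∈ Set.Ico 0 1) (hlam : 0 < lam)
    (hL : 0 < L) :
    ∫ r in (0 : ℝ)..L, max 1 (|r| * lam) ^ (-c) ≤ L * (L * lam) ^ (-c) / (1 - c) := by
  obtain ⟨hc₀, hc₁⟩ := hc
  calc ∫ r in (0 : ℝ)..L, max 1 (|r| * lam) ^ (-c)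
      ≤ ∫ r in (0 : ℝ)..L, r ^ (-c) * lam ^ (-c) := by
        -- At `r = 0` the junk value `0 ^ (-c) = 0` breaks the pointwise bound on `[0, L]`.
        refine intervalIntegral.integral_mono_on_of_le_Ioo hL.le
          ((continuous_max_one_abs_mul_rpow _ _).intervalIntegrable _ _)
          ((intervalIntegral.intervalIntegrable_rpow' (by linarith)).mul_const _) ?_
        rintro r ⟨hr, -⟩
        rw [← Real.mul_rpow hr.le hlam.le, abs_of_pos hr]
        exact Real.rpow_le_rpow_of_nonpos (by positivity) (le_max_right _ _) (by linarith)
    _ = L * (L * lam) ^ (-c) / (1 - c) := by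
        rw [intervalIntegral.integral_mul_const, integral_rpow (Or.inl (by linarith)),
          Real.zero_rpow (by linarith), Real.rpow_add hL, Real.rpow_one,
          Real.mul_rpow hL.le hlam.le]
        ring

lemma integral_neg_self_max_one_abs_mul_rpow_neg_le {c lam L : ℝ} (hc : c ∈ Set.Ico 0 1)
    (hlam : 0 < lam) (hL : 0 < L) :
    ∫ r in -L..L, max 1 (|r| * lam) ^ (-c) ≤ 2 / (1 - c) * L * (L * lam) ^ (-c) := by
  rw [intervalIntegral_neg_self_of_even (fun r => by simp only [abs_neg])
    ((continuous_max_one_abs_mul_rpow _ _).intervalIntegrable _ _), nsmul_eq_mul]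
  calc ((2 : ℕ) : ℝ) * ∫ r in (0 : ℝ)..L, max 1 (|r| * lam) ^ (-c)
      ≤ (2 : ℕ) * (L * (L * lam) ^ (-c) / (1 - c)) := by
        gcongr
        exact integral_max_one_abs_mul_rpow_neg_le hc hlam hL
    _ = 2 / (1 - c) * L * (L * lam) ^ (-c) := by push_cast; ring

end Kernel

section Average

variable {𝕜 X T E : Type*} [RCLike 𝕜] [MeasurableSpace X] [MeasurableSpace T]
  [NormedAddCommGroup E] {μ : Measure X}

lemma memLp_comp_measurePreserving_family {Y : Type*} [MeasurableSpace Y] {ρ : Measure Y}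
    [SFinite μ] [SFinite ρ] (ν : Measure T) [IsFiniteMeasure ν] {u : T → X → Y}
    (hu_meas : Measurable u.uncurry) (hu_pres : ∀ s, Measure.map (u s) μ = ρ)
    {p : ENNReal} {φ : Y → E} (hφ : MemLp φ p ρ) :
    MemLp (fun q : T × X => φ (u q.1 q.2)) p (ν.prod μ) :=
  (hφ.comp_snd ν).comp_measurePreserving
    ((MeasurePreserving.id ν).skew_product hu_meas (ae_of_all _ hu_pres))

lemma integral_comp_measurePreserving [NormedSpace ℝ E] {Y : Type*} [MeasurableSpace Y]
    {ρ : Measure Y} {u : X → Y} (hu : MeasurePreserving u μ ρ) {g : Y → E}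
    (hg : AEStronglyMeasurable g ρ) : ∫ x, g (u x) ∂μ = ∫ y, g y ∂ρ := by
  rw [← hu.map_eq, integral_map hu.aemeasurable (hu.map_eq ▸ hg)]

variable [InnerProductSpace 𝕜 E] [NormedSpace ℝ E] [CompleteSpace E]

lemma integral_norm_sq_average_le_of_correlation_le [SFinite μ] {L : ℝ} (hL : 0 < L)
    {f : ℝ → X → E} (hf : MemLp f.uncurry 2 ((volume.restrict (Set.Ioc 0 L)).prod μ))
    {k : ℝ → ℝ} (hk : Continuous k)
    (hfk : ∀ s t, ‖∫ x, ⟪f s x, f t x⟫_𝕜 ∂μ‖ ≤ k (t - s)) :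
    ∫ x, ‖L⁻¹ • ∫ s in (0 : ℝ)..L, f s x‖ ^ 2 ∂μ ≤ L⁻¹ * ∫ r in -L..L, k r := by
  have hk_nonneg : ∀ r, 0 ≤ k r := fun r => by
    simpa using (norm_nonneg _).trans (hfk 0 r)
  have hk_int : Integrable (fun z : ℝ × ℝ => k (z.2 - z.1))
      ((volume.restrict (Set.Ioc 0 L)).prod (volume.restrict (Set.Ioc 0 L))) := by
    rw [Measure.prod_restrict]
    have hk_cont : Continuous fun z : ℝ × ℝ => k (z.2 - z.1) := by fun_prop
    exact (hk_cont.continuousOn.integrableOn_compact (isCompact_Icc.prod isCompact_Icc)).mono_set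
      (Set.prod_mono Set.Ioc_subset_Icc_self Set.Ioc_subset_Icc_self)
  have hsq : ∫ x, ‖∫ s in (0 : ℝ)..L, f s x‖ ^ 2 ∂μ ≤ L * ∫ r in -L..L, k r := by
    refine le_trans ?_ (integral_integral_comp_sub_le hk hk_nonneg hL.le)
    simp_rw [intervalIntegral.integral_of_le hL.le]
    rw [← integral_prod _ hk_int]
    exact integral_norm_sq_integral_le hf hk_int hfk
  calc ∫ x, ‖L⁻¹ • ∫ s in (0 : ℝ)..L, f s x‖ ^ 2 ∂μ
      = L⁻¹ ^ 2 * ∫ x, ‖∫ s in (0 : ℝ)..L, f s x‖ ^ 2 ∂μ := by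
        simp_rw [norm_smul, mul_pow, norm_inv, Real.norm_of_nonneg hL.le]
        rw [integral_const_mul]
    _ ≤ L⁻¹ ^ 2 * (L * ∫ r in -L..L, k r) := by gcongr
    _ = L⁻¹ * ∫ r in -L..L, k r := by field_simp

lemma integral_inner_centered_flow [IsProbabilityMeasure μ] {u : ℝ → X → X}
    (hu_add : ∀ s t x, u (s + t) x = u s (u t x)) (hu : ∀ s, MeasurePreserving (u s) μ μ)
    {φ : X → E} (hφ : MemLp φ 2 μ) (s t : ℝ) :
    ∫ x, ⟪φ (u s x) - ∫ y, φ y ∂μ, φ (u t x) - ∫ y, φ y ∂μ⟫_𝕜 ∂μ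
      = ∫ x, ⟪φ x, φ (u (t - s) x)⟫_𝕜 ∂μ - ((‖∫ x, φ x ∂μ‖ ^ 2 : ℝ) : 𝕜) := by
  have hφu : ∀ r, MemLp (fun x => φ (u r x)) 2 μ := fun r => hφ.comp_measurePreserving (hu r)
  have hmean : ∀ r, ∫ x, φ (u r x) ∂μ = ∫ x, φ x ∂μ := fun r =>
    integral_comp_measurePreserving (hu r) hφ.1
  have hshift : ∀ x, u t x = u (t - s) (u s x) := fun x => by rw [← hu_add, sub_add_cancel]
  calc ∫ x, ⟪φ (u s x) - ∫ y, φ y ∂μ, φ (u t x) - ∫ y, φ y ∂μ⟫_𝕜 ∂μ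
      = ∫ x, ⟪φ (u s x), φ (u t x)⟫_𝕜 ∂μ - ⟪∫ x, φ x ∂μ, ∫ x, φ x ∂μ⟫_𝕜 := by
        simpa only [hmean] using integral_inner_sub_integral (𝕜 := 𝕜) (hφu s) (hφu t)
    _ = ∫ x, ⟪φ x, φ (u (t - s) x)⟫_𝕜 ∂μ - ((‖∫ x, φ x ∂μ‖ ^ 2 : ℝ) : 𝕜) := by
        simp_rw [hshift]
        rw [integral_comp_measurePreserving (hu s) (g := fun x => ⟪φ x, φ (u (t - s) x)⟫_𝕜)
          (hφ.1.inner (hφu _).1), inner_self_eq_norm_sq_to_K, RCLike.ofReal_pow]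

end Average

theorem mean_square_unipotent_average_general {𝕜 X E : Type*} [RCLike 𝕜] [MeasurableSpace X]
    [NormedAddCommGroup E] [InnerProductSpace 𝕜 E] [NormedSpace ℝ E] [CompleteSpace E]
    {μ : Measure X} [IsProbabilityMeasure μ] {u : ℝ → X → X}
    (hu_meas : Measurable fun q : ℝ × X => u q.1 q.2)
    (hu_add : ∀ s t x, u (s + t) x = u s (u t x)) (hu_pres : ∀ s, Measure.map (u s) μ = μ)
    {φ : X → E} (hφ : MemLp φ 2 μ)
    {ξ : ℝ → 𝕜} (hξ_meas : AEStronglyMeasurable ξ) (hξ : ∀ s, ‖ξ s‖ ≤ 1)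
    {C c lam : ℝ} (hc : c ∈ Set.Ico 0 1) (hlam : 0 < lam)
    (hcorr : ∀ s, ‖∫ x, ⟪φ x, φ (u s x)⟫_𝕜 ∂μ - ((‖∫ x, φ x ∂μ‖ ^ 2 : ℝ) : 𝕜)‖
      ≤ C * max 1 (|s| * lam) ^ (-c))
    {L : ℝ} (hL : 0 < L) :
    ∫ x, ‖L⁻¹ • ∫ s in (0 : ℝ)..L, ξ s • (φ (u s x) - ∫ y, φ y ∂μ)‖ ^ 2 ∂μ
      ≤ 2 / (1 - c) * C * (L * lam) ^ (-c) := by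
  have hu : ∀ s, MeasurePreserving (u s) μ μ := fun s =>
    ⟨Measurable.of_uncurry_left hu_meas, hu_pres s⟩
  have hC : 0 ≤ C := by simpa using (norm_nonneg _).trans (hcorr 0)
  have hmemLp : MemLp (fun q : ℝ × X => ξ q.1 • (φ (u q.1 q.2) - ∫ y, φ y ∂μ)) 2
      ((volume.restrict (Set.Ioc 0 L)).prod μ) := by
    have hcentered := (memLp_comp_measurePreserving_family (volume.restrict (Set.Ioc 0 L))
      hu_meas hu_pres hφ).sub (memLp_const (∫ y, φ y ∂μ))
    refine hcentered.of_le (hξ_meas.restrict.comp_fst.smul hcentered.1) (ae_of_all _ fun q => ?_)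
    rw [norm_smul]
    exact mul_le_of_le_one_left (norm_nonneg _) (hξ q.1)
  calc ∫ x, ‖L⁻¹ • ∫ s in (0 : ℝ)..L, ξ s • (φ (u s x) - ∫ y, φ y ∂μ)‖ ^ 2 ∂μ
      ≤ L⁻¹ * ∫ r in -L..L, C * max 1 (|r| * lam) ^ (-c) :=
        integral_norm_sq_average_le_of_correlation_le (𝕜 := 𝕜) hL hmemLp
          ((continuous_max_one_abs_mul_rpow _ _).const_mul C) fun s t =>
          (norm_integral_inner_smul_smul_le (hξ s) (hξ t) _ _).trans
            (integral_inner_centered_flow (𝕜 := 𝕜) hu_add hu hφ s t ▸ hcorr (t - s))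
    _ ≤ L⁻¹ * (C * (2 / (1 - c) * L * (L * lam) ^ (-c))) := by
        rw [intervalIntegral.integral_const_mul]
        gcongr
        exact integral_neg_self_max_one_abs_mul_rpow_neg_le hc hlam hL
    _ = 2 / (1 - c) * C * (L * lam) ^ (-c) := by field_simp

/-- Mean-square bound for the unipotent average of a function with polynomially
decaying autocorrelations: `μ(|φ_L|²) ≤ 14 C (Lλ)^{-c} S²`. -/
theorem mean_square_unipotent_average {X : Type*} [MeasurableSpace X]
    (μ : Measure X) [IsProbabilityMeasure μ]
    (u : ℝ → X → X)
    (hu_meas : Measurable fun q : ℝ × X => u q.1 q.2)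
    (hu_zero : ∀ x, u 0 x = x)
    (hu_add : ∀ s t x, u (s + t) x = u s (u t x))
    (hu_pres : ∀ s, Measure.map (u s) μ = μ)
    (φ : X → ℂ) (hφ_meas : Measurable φ) (hφ_bdd : ∃ K : ℝ, ∀ x, ‖φ x‖ ≤ K)
    (ξ : ℝ → ℂ) (hξ_meas : Measurable ξ) (hξ : ∀ s, ‖ξ s‖ = 1)
    (C : ℝ) (hC : 1 ≤ C) (c : ℝ) (hc : c ∈ Set.Ioo (0 : ℝ) (1 / 2))
    (lam S : ℝ) (hlam : 0 < lam) (hS : 0 ≤ S)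
    (hcorr : ∀ s : ℝ,
      ‖(∫ x, φ (u s x) * (starRingEnd ℂ) (φ x) ∂μ) -
          ((‖∫ x, φ x ∂μ‖ ^ 2 : ℝ) : ℂ)‖ ≤ C * max 1 (|s| * lam) ^ (-c) * S ^ 2)
    (L : ℝ) (hL : 0 < L) (hLlam : 1 ≤ L * lam) :
    ∫ x, ‖(1 / (L : ℂ)) * ∫ s in (0 : ℝ)..L, ξ s * (φ (u s x) - ∫ y, φ y ∂μ)‖ ^ 2 ∂μ
      ≤ 14 * C * (L * lam) ^ (-c) * S ^ 2 := by
  obtain ⟨K, hK⟩ := hφ_bdd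
  have hconst : 2 / (1 - c) ≤ 14 := by
    rw [div_le_iff₀ (by linarith [hc.2])]; linarith [hc.2]
  have hbound := mean_square_unipotent_average_general (𝕜 := ℂ) (C := C * S ^ 2) hu_meas hu_add
    hu_pres (.of_bound hφ_meas.aestronglyMeasurable K (ae_of_all _ hK))
    hξ_meas.aestronglyMeasurable (fun s => (hξ s).le) ⟨hc.1.le, by linarith [hc.2]⟩ hlam
    (fun s => (hcorr s).trans_eq (by ring)) hL
  calc ∫ x, ‖(1 / (L : ℂ)) * ∫ s in (0 : ℝ)..L, ξ s * (φ (u s x) - ∫ y, φ y ∂μ)‖ ^ 2 ∂μ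
      ≤ 2 / (1 - c) * (C * S ^ 2) * (L * lam) ^ (-c) := by simpa using hbound
    _ ≤ 14 * (C * S ^ 2) * (L * lam) ^ (-c) := by gcongr
    _ = 14 * C * (L * lam) ^ (-c) * S ^ 2 := by ring
end

section
/- Let (X, 𝓑, μ) be a probability space, p ≥ 1 an integer, and for each i = 1,…,p let (u^{(i)}_s)_{s∈ℝ} be a jointly measurable measure-preserving ℝ-flow on X. Let φ₁,…,φ_p : X → ℂ be bounded measurable functions, let ξ : ℝ → ℂ be measurable with |ξ(s)| = 1 for all s, and let C ≥ 1, c ∈ (0,1/2), S₁,…,S_p ≥ 0 and λ₁ ≥ λ₂ ≥ ⋯ ≥ λ_p > 0 be constants such that for every i: sup_X |φᵢ| ≤ Sᵢ, and for all s ∈ ℝ, |∫_X φᵢ(u^{(i)}_s x)·conj(φᵢ(x)) dμ(x) − |∫_X φᵢ dμ|²| ≤ C·max(1, |s|·λᵢ)^{−c}·Sᵢ². For L > 0 define ψ̃_L : X^p → ℂ by ψ̃_L(x₁,…,x_p) := (1/L)·∫₀^L ξ(s)·(∏_{i=1}^p φᵢ(u^{(i)}_s xᵢ) − ∏_{i=1}^p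 ∫_X φᵢ dμ) ds. Then for every L > 0 with L·λ_p ≥ 1 one has ∫_{X^p} |ψ̃_L|² d(μ^{⊗p}) ≤ 14·p·C·(L·λ_p)^{−c}·∏_{i=1}^p Sᵢ², where μ^{⊗p} is the p-fold product measure. -/
open MeasureTheory

/-!
Let `Y s` be the centred product observable at time `s`. The second moment of `L⁻¹ ∫₀ᴸ ξ(s) Y s ds`
is a double time average of `ξ(s) conj(ξ(t)) 𝔼[Y s conj(Y t)]`, so by Fubini only a bound on
`|𝔼[Y s conj(Y t)]|` in terms of `|s - t|` is needed, and the weight `ξ` plays no role.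

By independence of the coordinates and invariance of `μ`, this covariance is
`∏ᵢ aᵢ(s - t) - ∏ᵢ |∫ φᵢ|²`, where `aᵢ` is the autocorrelation of `φᵢ`. All factors are at most
`Sᵢ²`, so changing them one at a time gives the bound `∑ᵢ kᵢ(|s - t|) ∏ᵢ Sᵢ²` when
`|aᵢ(s) - |∫ φᵢ|²| ≤ kᵢ(|s|) Sᵢ²`. The double average of `k(|s - t|)` is at most
`(2 / L) ∫₀ᴸ k`, and for `k(r) = max(1, r λ)^(-c)` this is at most `(2 / (1 - c)) (L λ)^(-c)`.
-/

section MeanSquare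

open scoped ComplexConjugate

variable {𝕜 : Type*} [RCLike 𝕜]

lemma norm_prod_le_prod_of_le {ι R : Type*} [NormedCommRing R] [NormOneClass R] (s : Finset ι)
    {a : ι → R} {B : ι → ℝ} (ha : ∀ i ∈ s, ‖a i‖ ≤ B i) : ‖∏ i ∈ s, a i‖ ≤ ∏ i ∈ s, B i :=
  (s.norm_prod_le a).trans (Finset.prod_le_prod (fun i _ ↦ norm_nonneg (a i)) ha)

lemma norm_prod_sub_prod_le {ι R : Type*} [NormedCommRing R] [NormOneClass R] (s : Finset ι)
    {a b : ι → R} {D B : ι → ℝ} (ha : ∀ i ∈ s, ‖a i‖ ≤ B i) (hb : ∀ i ∈ s, ‖b i‖ ≤ B i)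
    (hab : ∀ i ∈ s, ‖a i - b i‖ ≤ D i * B i) :
    ‖∏ i ∈ s, a i - ∏ i ∈ s, b i‖ ≤ (∑ i ∈ s, D i) * ∏ i ∈ s, B i := by
  induction s using Finset.cons_induction with
  | empty => simp
  | cons j s hj ih =>
    simp only [Finset.forall_mem_cons] at ha hb hab
    have hbs : ‖∏ i ∈ s, b i‖ ≤ ∏ i ∈ s, B i := norm_prod_le_prod_of_le s hb.2
    simp only [Finset.prod_cons, Finset.sum_cons]
    calc ‖a j * ∏ i ∈ s, a i - b j * ∏ i ∈ s, b i‖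
        = ‖a j * (∏ i ∈ s, a i - ∏ i ∈ s, b i) + (a j - b j) * ∏ i ∈ s, b i‖ := by
          congr 1; ring
      _ ≤ ‖a j‖ * ‖∏ i ∈ s, a i - ∏ i ∈ s, b i‖ + ‖a j - b j‖ * ‖∏ i ∈ s, b i‖ :=
          norm_add_le_of_le (norm_mul_le _ _) (norm_mul_le _ _)
      _ ≤ B j * ((∑ i ∈ s, D i) * ∏ i ∈ s, B i) + D j * B j * ∏ i ∈ s, B i := by
          gcongr
          · exact (norm_nonneg _).trans ha.1
          · exact ha.1
          · exact ih ha.2 hb.2 hab.2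
          · exact (norm_nonneg _).trans hab.1
          · exact hab.1
      _ = (D j + ∑ i ∈ s, D i) * (B j * ∏ i ∈ s, B i) := by ring

lemma norm_mul_conj_le {z w : 𝕜} {B : ℝ} (hz : ‖z‖ ≤ B) (hw : ‖w‖ ≤ B) :
    ‖z * conj w‖ ≤ B ^ 2 := by
  rw [norm_mul, RCLike.norm_conj, sq]
  exact mul_le_mul hz hw (norm_nonneg w) ((norm_nonneg z).trans hz)

lemma norm_integral_le_of_forall_norm_le {Ω E : Type*} [MeasurableSpace Ω] (P : Measure Ω)
    [IsProbabilityMeasure P] [NormedAddCommGroup E] [NormedSpace ℝ E] {f : Ω → E} {B : ℝ}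
    (hf : ∀ x, ‖f x‖ ≤ B) : ‖∫ x, f x ∂P‖ ≤ B := by
  simpa only [probReal_univ, mul_one] using
    norm_integral_le_of_norm_le_const (μ := P) (.of_forall hf)

section SecondMoment

variable {T Ω : Type*} [MeasurableSpace T] [MeasurableSpace Ω]

lemma integral_norm_sq_integral (ν : Measure T) [SFinite ν] (P : Measure Ω) [SFinite P]
    {Y : T → Ω → 𝕜}
    (hY : Integrable (fun q : Ω × T × T ↦ Y q.2.1 q.1 * conj (Y q.2.2 q.1)) (P.prod (ν.prod ν))) :
    ((∫ x, ‖∫ s, Y s x ∂ν‖ ^ 2 ∂P : ℝ) : 𝕜) =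
      ∫ z, ∫ x, Y z.1 x * conj (Y z.2 x) ∂P ∂(ν.prod ν) := by
  have norm_sq_eq (x : Ω) : ((‖∫ s, Y s x ∂ν‖ ^ 2 : ℝ) : 𝕜) =
      ∫ z, Y z.1 x * conj (Y z.2 x) ∂(ν.prod ν) := by
    rw [integral_prod_mul (fun s ↦ Y s x) (fun t ↦ conj (Y t x)), integral_conj,
      RCLike.mul_conj, RCLike.ofReal_pow]
  rw [← integral_ofReal]
  simp_rw [norm_sq_eq]
  exact integral_integral_swap hY

lemma integral_norm_sq_integral_le_s4 (ν : Measure T) [IsFiniteMeasure ν] (P : Measure Ω)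
    [IsFiniteMeasure P] {Y : T → Ω → 𝕜} (hY : Measurable (Function.uncurry Y)) {M : ℝ}
    (hYM : ∀ s x, ‖Y s x‖ ≤ M) {κ : T × T → ℝ} (hκ : Integrable κ (ν.prod ν))
    (hYκ : ∀ z, ‖∫ x, Y z.1 x * conj (Y z.2 x) ∂P‖ ≤ κ z) :
    ∫ x, ‖∫ s, Y s x ∂ν‖ ^ 2 ∂P ≤ ∫ z, κ z ∂(ν.prod ν) := by
  have hmeas : Measurable fun q : Ω × T × T ↦ Y q.2.1 q.1 * conj (Y q.2.2 q.1) :=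
    (hY.comp (measurable_snd.fst.prodMk measurable_fst)).mul
      (RCLike.continuous_conj.measurable.comp
        (hY.comp (measurable_snd.snd.prodMk measurable_fst)))
  have hint : Integrable (fun q : Ω × T × T ↦ Y q.2.1 q.1 * conj (Y q.2.2 q.1))
      (P.prod (ν.prod ν)) :=
    .of_bound hmeas.aestronglyMeasurable (M ^ 2)
      (.of_forall fun q ↦ norm_mul_conj_le (hYM _ _) (hYM _ _))
  calc ∫ x, ‖∫ s, Y s x ∂ν‖ ^ 2 ∂P
      ≤ ‖((∫ x, ‖∫ s, Y s x ∂ν‖ ^ 2 ∂P : ℝ) : 𝕜)‖ := by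
        rw [RCLike.norm_ofReal]
        exact le_abs_self _
    _ = ‖∫ z, ∫ x, Y z.1 x * conj (Y z.2 x) ∂P ∂(ν.prod ν)‖ := by
        rw [integral_norm_sq_integral ν P hint]
    _ ≤ ∫ z, κ z ∂(ν.prod ν) := norm_integral_le_of_norm_le hκ (.of_forall hYκ)

end SecondMoment

section DifferenceKernel

variable {k : ℝ → ℝ} {L : ℝ}

lemma integrable_antitone_comp_abs (hk : Antitone k) (hk₀ : ∀ r, 0 ≤ k r) {Ω : Type*}
    [MeasurableSpace Ω] (ν : Measure Ω) [IsFiniteMeasure ν] {f : Ω → ℝ} (hf : Measurable f) :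
    Integrable (fun x ↦ k |f x|) ν :=
  .of_bound (hk.measurable.comp hf.abs).aestronglyMeasurable (k 0) (.of_forall fun x ↦
    (Real.norm_of_nonneg (hk₀ _)).trans_le (hk (abs_nonneg (f x))))

lemma intervalIntegral_abs_sub_le (hk : Antitone k) (hk₀ : ∀ r, 0 ≤ k r) {s : ℝ}
    (hs : s ∈ Set.Icc 0 L) : ∫ t in 0..L, k |s - t| ≤ 2 * ∫ r in 0..L, k r := by
  have hint_abs (a b : ℝ) : IntervalIntegrable (fun t ↦ k |s - t|) volume a b :=
    ⟨integrable_antitone_comp_abs hk hk₀ _ (measurable_id.const_sub s),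
      integrable_antitone_comp_abs hk hk₀ _ (measurable_id.const_sub s)⟩
  have past : ∫ t in 0..s, k |s - t| = ∫ r in 0..s, k r := by
    rw [intervalIntegral.integral_congr (g := fun t ↦ k (s - t)),
      intervalIntegral.integral_comp_sub_left, sub_self, sub_zero]
    intro t ht
    rw [Set.uIcc_of_le hs.1] at ht
    simp only [abs_of_nonneg (sub_nonneg.2 ht.2)]
  have future : ∫ t in s..L, k |s - t| = ∫ r in 0..(L - s), k r := by
    rw [intervalIntegral.integral_congr (g := fun t ↦ k (t - s)),
      intervalIntegral.integral_comp_sub_right, sub_self]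
    intro t ht
    rw [Set.uIcc_of_le hs.2] at ht
    simp only [abs_sub_comm s, abs_of_nonneg (sub_nonneg.2 ht.1)]
  have initial_le {b : ℝ} (hb : b ∈ Set.Icc 0 L) : ∫ r in 0..b, k r ≤ ∫ r in 0..L, k r :=
    intervalIntegral.integral_mono_interval le_rfl hb.1 hb.2 (.of_forall hk₀) hk.intervalIntegrable
  calc ∫ t in 0..L, k |s - t|
      = (∫ r in 0..s, k r) + ∫ r in 0..(L - s), k r := by
        rw [← past, ← future, intervalIntegral.integral_add_adjacent_intervals] <;>
          exact hint_abs _ _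
    _ ≤ 2 * ∫ r in 0..L, k r := by
        rw [two_mul]
        exact add_le_add (initial_le hs)
          (initial_le ⟨sub_nonneg.2 hs.2, sub_le_self L hs.1⟩)

lemma integral_prod_abs_sub_le (hk : Antitone k) (hk₀ : ∀ r, 0 ≤ k r) (hL : 0 ≤ L) :
    ∫ z : ℝ × ℝ, k |z.1 - z.2|
        ∂((volume.restrict (Set.Ioc 0 L)).prod (volume.restrict (Set.Ioc 0 L)))
      ≤ 2 * L * ∫ r in 0..L, k r := by
  have hint : Integrable (fun z : ℝ × ℝ ↦ k |z.1 - z.2|)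
      ((volume.restrict (Set.Ioc 0 L)).prod (volume.restrict (Set.Ioc 0 L))) :=
    integrable_antitone_comp_abs hk hk₀ _ (measurable_fst.sub measurable_snd)
  calc _ = ∫ s in Set.Ioc 0 L, ∫ t in 0..L, k |s - t| := by
        simp_rw [integral_prod _ hint, intervalIntegral.integral_of_le hL]
    _ ≤ ∫ _ in Set.Ioc 0 L, 2 * ∫ r in 0..L, k r := by
        refine setIntegral_mono_on ?_ (integrable_const _) measurableSet_Ioc fun s hs ↦
          intervalIntegral_abs_sub_le hk hk₀ (Set.Ioc_subset_Icc_self hs)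
        simp_rw [intervalIntegral.integral_of_le hL]
        exact hint.integral_prod_left
    _ = 2 * L * ∫ r in 0..L, k r := by
        rw [setIntegral_const, Real.volume_real_Ioc_of_le hL, sub_zero, smul_eq_mul]
        ring

lemma integral_norm_sq_average_le {Ω : Type*} [MeasurableSpace Ω] (P : Measure Ω)
    [IsFiniteMeasure P] {Y : ℝ → Ω → 𝕜} (hY : Measurable (Function.uncurry Y)) {M : ℝ}
    (hYM : ∀ s x, ‖Y s x‖ ≤ M) (hk : Antitone k) (hk₀ : ∀ r, 0 ≤ k r)
    (hYk : ∀ s t, ‖∫ x, Y s x * conj (Y t x) ∂P‖ ≤ k |s - t|)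
    {ξ : ℝ → 𝕜} (hξ : Measurable ξ) (hξ₁ : ∀ s, ‖ξ s‖ ≤ 1) (hL : 0 < L) :
    ∫ x, ‖1 / (L : 𝕜) * ∫ s in 0..L, ξ s * Y s x‖ ^ 2 ∂P ≤ 2 / L * ∫ r in 0..L, k r := by
  have hξY : ∀ s x, ‖ξ s * Y s x‖ ≤ M := fun s x ↦
    (norm_mul_le_of_le (hξ₁ s) (hYM s x)).trans_eq (one_mul M)
  have hcov (z : ℝ × ℝ) :
      ‖∫ x, ξ z.1 * Y z.1 x * conj (ξ z.2 * Y z.2 x) ∂P‖ ≤ k |z.1 - z.2| := by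
    have factor (x : Ω) : ξ z.1 * Y z.1 x * conj (ξ z.2 * Y z.2 x) =
        ξ z.1 * conj (ξ z.2) * (Y z.1 x * conj (Y z.2 x)) := by
      rw [map_mul, mul_mul_mul_comm]
    simp_rw [factor]
    rw [integral_const_mul, ← one_mul (k _), ← one_pow 2]
    exact norm_mul_le_of_le (norm_mul_conj_le (hξ₁ _) (hξ₁ _)) (hYk _ _)
  have hint : ∫ x, ‖∫ s in Set.Ioc 0 L, ξ s * Y s x‖ ^ 2 ∂P ≤ 2 * L * ∫ r in 0..L, k r :=
    (integral_norm_sq_integral_le_s4 _ P ((hξ.comp measurable_fst).mul hY) hξY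
      (integrable_antitone_comp_abs hk hk₀ _ (measurable_fst.sub measurable_snd)) hcov).trans
      (integral_prod_abs_sub_le hk hk₀ hL.le)
  have hnorm (x : Ω) : ‖1 / (L : 𝕜) * ∫ s in 0..L, ξ s * Y s x‖ ^ 2 =
      (L ^ 2)⁻¹ * ‖∫ s in Set.Ioc 0 L, ξ s * Y s x‖ ^ 2 := by
    rw [intervalIntegral.integral_of_le hL.le, norm_mul, mul_pow, one_div, norm_inv,
      RCLike.norm_ofReal, inv_pow, sq_abs]
  simp_rw [hnorm]
  rw [integral_const_mul, inv_mul_le_iff₀ (by positivity)]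
  refine hint.trans_eq ?_
  field_simp

end DifferenceKernel

section PowerDecay

variable {c l : ℝ}

lemma antitone_max_one_mul_rpow_neg (hc : 0 ≤ c) (hl : 0 ≤ l) :
    Antitone fun r : ℝ ↦ max 1 (r * l) ^ (-c) := fun r r' hr ↦
  Real.rpow_le_rpow_of_nonpos (by positivity) (by gcongr) (neg_nonpos.2 hc)

lemma integral_max_one_mul_rpow_neg_le {L : ℝ} (hc : c ∈ Set.Ico 0 1) (hl : 0 < l) (hL : 0 ≤ L) :
    ∫ r in 0..L, max 1 (r * l) ^ (-c) ≤ L / (1 - c) * (L * l) ^ (-c) := by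
  have hint : IntervalIntegrable (fun r : ℝ ↦ r ^ (-c) * l ^ (-c)) volume 0 L :=
    (intervalIntegral.intervalIntegrable_rpow' (by linarith [hc.2])).mul_const _
  calc ∫ r in 0..L, max 1 (r * l) ^ (-c)
      ≤ ∫ r in 0..L, r ^ (-c) * l ^ (-c) := by
        refine intervalIntegral.integral_mono_on_of_le_Ioo hL
          (antitone_max_one_mul_rpow_neg hc.1 hl.le).intervalIntegrable hint fun r hr ↦ ?_
        rw [← Real.mul_rpow hr.1.le hl.le]
        exact Real.rpow_le_rpow_of_nonpos (mul_pos hr.1 hl) (le_max_right _ _)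
          (neg_nonpos.2 hc.1)
    _ = L ^ (1 - c) / (1 - c) * l ^ (-c) := by
        rw [intervalIntegral.integral_mul_const, integral_rpow (.inl (by linarith [hc.2])),
          neg_add_eq_sub, Real.zero_rpow (by linarith [hc.2]), sub_zero]
    _ = L / (1 - c) * (L * l) ^ (-c) := by
        rw [Real.mul_rpow hL hl.le, sub_eq_add_neg, Real.rpow_add' hL (by linarith [hc.2]),
          Real.rpow_one]
        ring

end PowerDecay

section Product

variable {ι : Type*} [Fintype ι] {X : ι → Type*} [∀ i, MeasurableSpace (X i)]

lemma integral_sub_integral_mul_conj {Ω : Type*} [MeasurableSpace Ω] (P : Measure Ω)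
    [IsProbabilityMeasure P] {f g : Ω → 𝕜} (hf : Integrable f P) (hg : Integrable g P)
    (hfg : Integrable (fun x ↦ f x * conj (g x)) P) :
    ∫ x, (f x - ∫ y, f y ∂P) * conj (g x - ∫ y, g y ∂P) ∂P =
      ∫ x, f x * conj (g x) ∂P - (∫ x, f x ∂P) * conj (∫ x, g x ∂P) := by
  set a := ∫ y, f y ∂P
  set b := ∫ y, g y ∂P
  have hfa : Integrable (fun x ↦ f x - a) P := hf.sub (integrable_const a)
  have integral_sub_eq_zero : ∫ x, (f x - a) ∂P = 0 := by
    rw [integral_sub hf (integrable_const a), integral_const, probReal_univ, one_smul, sub_self]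
  have hag : Integrable (fun x ↦ a * conj (g x)) P :=
    (RCLike.conjLIE.integrable_comp_iff.2 hg).const_mul a
  have hfag : Integrable (fun x ↦ f x * conj (g x) - a * conj (g x)) P := hfg.sub hag
  have expand (x : Ω) : (f x - a) * conj (g x - b) =
      f x * conj (g x) - a * conj (g x) - (f x - a) * conj b := by
    rw [map_sub]; ring
  simp_rw [expand]
  rw [integral_sub hfag (hfa.mul_const _), integral_sub hfg hag, integral_const_mul,
    integral_mul_const, integral_sub_eq_zero, integral_conj, zero_mul, sub_zero]

/-- The tensor product of the observables `f i`, centred with respect to `Measure.pi μ`; its mean is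
written as the product of the means of its factors. -/
noncomputable def centeredProd (μ : ∀ i, Measure (X i)) (f : ∀ i, X i → 𝕜) (x : ∀ i, X i) : 𝕜 :=
  ∏ i, f i (x i) - ∏ i, ∫ y, f i y ∂μ i

variable (μ : ∀ i, Measure (X i)) [∀ i, IsProbabilityMeasure (μ i)]

lemma norm_centeredProd_le {f : ∀ i, X i → 𝕜} {S : ι → ℝ} (hf : ∀ i x, ‖f i x‖ ≤ S i)
    (x : ∀ i, X i) : ‖centeredProd μ f x‖ ≤ 2 * ∏ i, S i := by
  rw [two_mul]
  exact norm_sub_le_of_le (norm_prod_le_prod_of_le _ fun i _ ↦ hf i (x i))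
    (norm_prod_le_prod_of_le _ fun i _ ↦ norm_integral_le_of_forall_norm_le (μ i) (hf i))

lemma integral_centeredProd_mul_conj {f g : ∀ i, X i → 𝕜} (hf : ∀ i, MemLp (f i) 2 (μ i))
    (hg : ∀ i, MemLp (g i) 2 (μ i)) :
    ∫ x, centeredProd μ f x * conj (centeredProd μ g x) ∂(Measure.pi μ) =
      ∏ i, ∫ y, f i y * conj (g i y) ∂μ i -
        ∏ i, (∫ y, f i y ∂μ i) * conj (∫ y, g i y ∂μ i) := by
  have hfi : Integrable (fun x : ∀ i, X i ↦ ∏ i, f i (x i)) (Measure.pi μ) :=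
    .fintype_prod_dep fun i ↦ (hf i).integrable one_le_two
  have hgi : Integrable (fun x : ∀ i, X i ↦ ∏ i, g i (x i)) (Measure.pi μ) :=
    .fintype_prod_dep fun i ↦ (hg i).integrable one_le_two
  have prod_mul_conj (x : ∀ i, X i) : (∏ i, f i (x i)) * conj (∏ i, g i (x i)) =
      ∏ i, f i (x i) * conj (g i (x i)) := by
    rw [map_prod, Finset.prod_mul_distrib]
  have hfgi : Integrable (fun x : ∀ i, X i ↦ (∏ i, f i (x i)) * conj (∏ i, g i (x i)))
      (Measure.pi μ) := by
    simp_rw [prod_mul_conj]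
    exact .fintype_prod_dep (f := fun i y ↦ f i y * conj (g i y)) fun i ↦
      (hf i).integrable_mul (hg i).star
  have key := integral_sub_integral_mul_conj (Measure.pi μ) hfi hgi hfgi
  simp_rw [prod_mul_conj] at key
  rw [integral_fintype_prod_eq_prod f, integral_fintype_prod_eq_prod g,
    integral_fintype_prod_eq_prod fun i y ↦ f i y * conj (g i y), map_prod,
    ← Finset.prod_mul_distrib] at key
  exact key

lemma norm_integral_centeredProd_mul_conj_le {f g : ∀ i, X i → 𝕜}
    (hf : ∀ i, AEStronglyMeasurable (f i) (μ i)) (hg : ∀ i, AEStronglyMeasurable (g i) (μ i))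
    {S D : ι → ℝ} (hfS : ∀ i x, ‖f i x‖ ≤ S i) (hgS : ∀ i x, ‖g i x‖ ≤ S i)
    (hfgD : ∀ i, ‖∫ y, f i y * conj (g i y) ∂μ i -
      (∫ y, f i y ∂μ i) * conj (∫ y, g i y ∂μ i)‖ ≤ D i * S i ^ 2) :
    ‖∫ x, centeredProd μ f x * conj (centeredProd μ g x) ∂(Measure.pi μ)‖ ≤
      (∑ i, D i) * ∏ i, S i ^ 2 := by
  rw [integral_centeredProd_mul_conj μ (fun i ↦ .of_bound (hf i) (S i) (.of_forall (hfS i)))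
    (fun i ↦ .of_bound (hg i) (S i) (.of_forall (hgS i)))]
  refine norm_prod_sub_prod_le _ (fun i _ ↦ ?_) (fun i _ ↦ ?_) (fun i _ ↦ hfgD i)
  · exact norm_integral_le_of_forall_norm_le (μ i) fun y ↦ norm_mul_conj_le (hfS i y) (hgS i y)
  · exact norm_mul_conj_le (norm_integral_le_of_forall_norm_le (μ i) (hfS i))
      (norm_integral_le_of_forall_norm_le (μ i) (hgS i))

end Product

section Flow

/-- `u` is a jointly measurable `ℝ`-flow on `X` (`u s` is the time-`s` map) each of whose time maps
preserves `μ`. -/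
structure IsMeasurePreservingFlow {X : Type*} [MeasurableSpace X] (μ : Measure X)
    (u : ℝ → X → X) : Prop where
  measurable_uncurry : Measurable fun q : ℝ × X ↦ u q.1 q.2
  map_zero : ∀ x, u 0 x = x
  map_add : ∀ s t x, u (s + t) x = u s (u t x)
  map_eq : ∀ s, Measure.map (u s) μ = μ

/-- The autocovariance of the observable `φ` at time lag `s` along `u`, which measures mixing. The
product of the means of `φ ∘ u s` and `conj φ` is written as `‖∫ φ‖ ^ 2`, which presupposes that `u`
preserves `μ`. -/
noncomputable def autocovariance {X : Type*} [MeasurableSpace X] (μ : Measure X) (u : ℝ → X → X)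
    (φ : X → 𝕜) (s : ℝ) : 𝕜 :=
  ∫ x, φ (u s x) * conj (φ x) ∂μ - ((‖∫ x, φ x ∂μ‖ ^ 2 : ℝ) : 𝕜)

namespace IsMeasurePreservingFlow

variable {X : Type*} [MeasurableSpace X] {μ : Measure X} {u : ℝ → X → X}

lemma measurable (hu : IsMeasurePreservingFlow μ u) (s : ℝ) : Measurable (u s) :=
  hu.measurable_uncurry.comp measurable_prodMk_left

lemma measurableEmbedding (hu : IsMeasurePreservingFlow μ u) (s : ℝ) :
    MeasurableEmbedding (u s) := by
  have inverse (t : ℝ) (x : X) : u (-t) (u t x) = x := by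
    rw [← hu.map_add, neg_add_cancel, hu.map_zero]
  exact MeasurableEquiv.measurableEmbedding
    { toFun := u s
      invFun := u (-s)
      left_inv := inverse s
      right_inv := fun x ↦ by simpa only [neg_neg] using inverse (-s) x
      measurable_toFun := hu.measurable s
      measurable_invFun := hu.measurable (-s) }

lemma integral_comp {E : Type*} [NormedAddCommGroup E] [NormedSpace ℝ E]
    (hu : IsMeasurePreservingFlow μ u) (s : ℝ) (f : X → E) : ∫ x, f (u s x) ∂μ = ∫ x, f x ∂μ :=
  MeasurePreserving.integral_comp ⟨hu.measurable s, hu.map_eq s⟩ (hu.measurableEmbedding s) f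

lemma covariance_eq_autocovariance (hu : IsMeasurePreservingFlow μ u) (φ : X → 𝕜) (s t : ℝ) :
    ∫ x, φ (u s x) * conj (φ (u t x)) ∂μ -
        (∫ x, φ (u s x) ∂μ) * conj (∫ x, φ (u t x) ∂μ) =
      autocovariance μ u φ (s - t) := by
  have shift (x : X) : φ (u s x) * conj (φ (u t x)) =
      φ (u (s - t) (u t x)) * conj (φ (u t x)) := by
    rw [← hu.map_add, sub_add_cancel]
  simp_rw [shift]
  rw [hu.integral_comp t fun x ↦ φ (u (s - t) x) * conj (φ x), hu.integral_comp s φ,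
    hu.integral_comp t φ, RCLike.mul_conj, autocovariance, RCLike.ofReal_pow]

end IsMeasurePreservingFlow

end Flow

section ProductFlow

variable {ι : Type*} [Fintype ι] {X : ι → Type*} [∀ i, MeasurableSpace (X i)]
  {μ : ∀ i, Measure (X i)} {u : ∀ i, ℝ → X i → X i}
  {φ : ∀ i, X i → 𝕜} {S : ι → ℝ}

lemma centeredProd_comp_flow (hu : ∀ i, IsMeasurePreservingFlow (μ i) (u i))
    (φ : ∀ i, X i → 𝕜) (s : ℝ) (x : ∀ i, X i) :
    centeredProd μ (fun i y ↦ φ i (u i s y)) x =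
      ∏ i, φ i (u i s (x i)) - ∏ i, ∫ y, φ i y ∂μ i :=
  congrArg (_ - ·) (Finset.prod_congr rfl fun i _ ↦ (hu i).integral_comp s (φ i))

lemma measurable_uncurry_centeredProd_flow (hu : ∀ i, IsMeasurePreservingFlow (μ i) (u i))
    (hφ : ∀ i, Measurable (φ i)) :
    Measurable (Function.uncurry fun s ↦ centeredProd μ fun i y ↦ φ i (u i s y)) := by
  simp only [Function.uncurry_def, centeredProd_comp_flow hu φ]
  refine (Finset.measurable_prod _ fun i _ ↦ ?_).sub_const _
  exact (hφ i).comp ((hu i).measurable_uncurry.comp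
    (measurable_fst.prodMk ((measurable_pi_apply i).comp measurable_snd)))

lemma norm_integral_centeredProd_flow_le [∀ i, IsProbabilityMeasure (μ i)]
    (hu : ∀ i, IsMeasurePreservingFlow (μ i) (u i)) (hφ : ∀ i, Measurable (φ i))
    (hφS : ∀ i x, ‖φ i x‖ ≤ S i) {k : ι → ℝ → ℝ}
    (hk : ∀ i s, ‖autocovariance (μ i) (u i) (φ i) s‖ ≤ k i |s| * S i ^ 2) (s t : ℝ) :
    ‖∫ x, centeredProd μ (fun i y ↦ φ i (u i s y)) x *
        conj (centeredProd μ (fun i y ↦ φ i (u i t y)) x) ∂(Measure.pi μ)‖ ≤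
      (∑ i, k i |s - t|) * ∏ i, S i ^ 2 := by
  have hφu (r : ℝ) (i : ι) : AEStronglyMeasurable (fun y ↦ φ i (u i r y)) (μ i) :=
    ((hφ i).comp ((hu i).measurable r)).aestronglyMeasurable
  refine norm_integral_centeredProd_mul_conj_le μ (hφu s) (hφu t) (fun i y ↦ hφS i _)
    (fun i y ↦ hφS i _) fun i ↦ ?_
  rw [(hu i).covariance_eq_autocovariance (φ i)]
  exact hk i (s - t)

theorem product_mean_square_le_of_autocovariance_le [∀ i, IsProbabilityMeasure (μ i)]
    (hu : ∀ i, IsMeasurePreservingFlow (μ i) (u i)) (hφ : ∀ i, Measurable (φ i))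
    (hφS : ∀ i x, ‖φ i x‖ ≤ S i) {k : ι → ℝ → ℝ} (hk : ∀ i, Antitone (k i))
    (hk₀ : ∀ i r, 0 ≤ k i r)
    (hcov : ∀ i s, ‖autocovariance (μ i) (u i) (φ i) s‖ ≤ k i |s| * S i ^ 2)
    {ξ : ℝ → 𝕜} (hξ : Measurable ξ) (hξ₁ : ∀ s, ‖ξ s‖ ≤ 1) {L : ℝ} (hL : 0 < L) :
    ∫ x : ∀ i, X i, ‖1 / (L : 𝕜) * ∫ s in 0..L,
        ξ s * (∏ i, φ i (u i s (x i)) - ∏ i, ∫ y, φ i y ∂μ i)‖ ^ 2 ∂(Measure.pi μ) ≤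
      2 / L * (∑ i, ∫ r in 0..L, k i r) * ∏ i, S i ^ 2 := by
  have hprod : 0 ≤ ∏ i, S i ^ 2 := Finset.prod_nonneg fun i _ ↦ sq_nonneg (S i)
  have hsum_antitone : Antitone fun r ↦ (∑ i, k i r) * ∏ i, S i ^ 2 := fun r r' hr ↦
    mul_le_mul_of_nonneg_right (Finset.sum_le_sum fun i _ ↦ hk i hr) hprod
  have hsum_nonneg (r : ℝ) : 0 ≤ (∑ i, k i r) * ∏ i, S i ^ 2 :=
    mul_nonneg (Finset.sum_nonneg fun i _ ↦ hk₀ i r) hprod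
  have key := integral_norm_sq_average_le (Measure.pi μ)
    (measurable_uncurry_centeredProd_flow hu hφ)
    (fun s ↦ norm_centeredProd_le μ fun i y ↦ hφS i (u i s y))
    hsum_antitone hsum_nonneg (norm_integral_centeredProd_flow_le hu hφ hφS hcov) hξ hξ₁ hL
  simp_rw [centeredProd_comp_flow hu φ] at key
  rwa [intervalIntegral.integral_mul_const,
    intervalIntegral.integral_finsetSum fun i _ ↦ (hk i).intervalIntegrable, ← mul_assoc] at key

theorem product_mean_square_estimate_general [∀ i, IsProbabilityMeasure (μ i)]
    (hu : ∀ i, IsMeasurePreservingFlow (μ i) (u i)) (hφ : ∀ i, Measurable (φ i))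
    (hφS : ∀ i x, ‖φ i x‖ ≤ S i) {C c : ℝ} (hC : 0 ≤ C) (hc : c ∈ Set.Ico 0 1)
    {lam : ι → ℝ} (hlam : ∀ i, 0 < lam i)
    (hcov : ∀ i s, ‖autocovariance (μ i) (u i) (φ i) s‖ ≤
      C * max 1 (|s| * lam i) ^ (-c) * S i ^ 2)
    {ξ : ℝ → 𝕜} (hξ : Measurable ξ) (hξ₁ : ∀ s, ‖ξ s‖ ≤ 1) {L : ℝ} (hL : 0 < L) :
    ∫ x : ∀ i, X i, ‖1 / (L : 𝕜) * ∫ s in 0..L,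
        ξ s * (∏ i, φ i (u i s (x i)) - ∏ i, ∫ y, φ i y ∂μ i)‖ ^ 2 ∂(Measure.pi μ) ≤
      2 / (1 - c) * C * (∑ i, (L * lam i) ^ (-c)) * ∏ i, S i ^ 2 := by
  have hrate (i : ι) : ∫ r in 0..L, C * max 1 (r * lam i) ^ (-c) ≤
      C * (L / (1 - c) * (L * lam i) ^ (-c)) := by
    rw [intervalIntegral.integral_const_mul]
    exact mul_le_mul_of_nonneg_left (integral_max_one_mul_rpow_neg_le hc (hlam i) hL.le) hC
  refine (product_mean_square_le_of_autocovariance_le hu hφ hφS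
    (fun i ↦ (antitone_max_one_mul_rpow_neg hc.1 (hlam i).le).const_mul hC)
    (fun i r ↦ by positivity) hcov hξ hξ₁ hL).trans ?_
  gcongr ?_ * _
  calc 2 / L * ∑ i, ∫ r in 0..L, C * max 1 (r * lam i) ^ (-c)
      ≤ 2 / L * ∑ i, C * (L / (1 - c) * (L * lam i) ^ (-c)) := by
        gcongr with i
        exact hrate i
    _ = 2 / (1 - c) * C * ∑ i, (L * lam i) ^ (-c) := by
        simp_rw [Finset.mul_sum]
        refine Finset.sum_congr rfl fun i _ ↦ ?_
        field_simp

end ProductFlow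

lemma sum_mul_rpow_neg_le_card_mul {ι : Type*} [Fintype ι] {lam : ι → ℝ} {l L c : ℝ} (hl : 0 < l)
    (hlam : ∀ i, l ≤ lam i) (hL : 0 < L) (hc : 0 ≤ c) :
    ∑ i, (L * lam i) ^ (-c) ≤ Fintype.card ι * (L * l) ^ (-c) := by
  rw [← nsmul_eq_mul]
  refine Finset.sum_le_card_nsmul _ _ _ fun i _ ↦ ?_
  exact Real.rpow_le_rpow_of_nonpos (by positivity) (by gcongr; exact hlam i) (neg_nonpos.2 hc)

end MeanSquare

/-- The product-measure mean-square estimate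
`μ^{⊗p}(|ψ̃_L|²) ≤ 14 p C (L λ_p)^{-c} ∏ Sᵢ²`. -/
theorem product_mean_square_estimate {X : Type*} [MeasurableSpace X]
    (μ : Measure X) [IsProbabilityMeasure μ]
    (p : ℕ) (hp : 1 ≤ p)
    (u : Fin p → ℝ → X → X)
    (hu_meas : ∀ i, Measurable fun q : ℝ × X => u i q.1 q.2)
    (hu_zero : ∀ i x, u i 0 x = x)
    (hu_add : ∀ i s t x, u i (s + t) x = u i s (u i t x))
    (hu_pres : ∀ i s, Measure.map (u i s) μ = μ)
    (φ : Fin p → X → ℂ) (hφ_meas : ∀ i, Measurable (φ i))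
    (ξ : ℝ → ℂ) (hξ_meas : Measurable ξ) (hξ : ∀ s, ‖ξ s‖ = 1)
    (C : ℝ) (hC : 1 ≤ C) (c : ℝ) (hc : c ∈ Set.Ioo (0 : ℝ) (1 / 2))
    (S : Fin p → ℝ) (hS : ∀ i, 0 ≤ S i)
    (lam : Fin p → ℝ)
    (hlam_mono : ∀ i j : Fin p, i ≤ j → lam j ≤ lam i)
    (hlam_pos : 0 < lam ⟨p - 1, by omega⟩)
    (hφ_bdd : ∀ i x, ‖φ i x‖ ≤ S i)
    (hcorr : ∀ i, ∀ s : ℝ,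
      ‖(∫ x, φ i (u i s x) * (starRingEnd ℂ) (φ i x) ∂μ) -
          ((‖∫ x, φ i x ∂μ‖ ^ 2 : ℝ) : ℂ)‖ ≤ C * max 1 (|s| * lam i) ^ (-c) * S i ^ 2)
    (L : ℝ) (hL : 0 < L) (hLlam : 1 ≤ L * lam ⟨p - 1, by omega⟩) :
    ∫ x : Fin p → X,
        ‖(1 / (L : ℂ)) * ∫ s in (0 : ℝ)..L,
            ξ s * ((∏ i, φ i (u i s (x i))) - ∏ i, ∫ y, φ i y ∂μ)‖ ^ 2
        ∂(Measure.pi fun _ => μ)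
      ≤ 14 * p * C * (L * lam ⟨p - 1, by omega⟩) ^ (-c) * ∏ i, S i ^ 2 := by
  have hlam (i : Fin p) : lam ⟨p - 1, by omega⟩ ≤ lam i :=
    hlam_mono _ _ (Fin.le_def.2 (Nat.le_sub_one_of_lt i.2))
  refine (product_mean_square_estimate_general
    (fun i ↦ ⟨hu_meas i, hu_zero i, hu_add i, hu_pres i⟩) hφ_meas hφ_bdd (zero_le_one.trans hC)
    ⟨hc.1.le, by linarith [hc.2]⟩ (fun i ↦ hlam_pos.trans_le (hlam i)) hcorr hξ_meas
    (fun s ↦ (hξ s).le) hL).trans ?_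
  have hconst : 2 / (1 - c) ≤ 14 := (div_le_iff₀ (by linarith [hc.2])).2 (by linarith [hc.2])
  calc 2 / (1 - c) * C * (∑ i, (L * lam i) ^ (-c)) * ∏ i, S i ^ 2
      ≤ 14 * C * (p * (L * lam ⟨p - 1, by omega⟩) ^ (-c)) * ∏ i, S i ^ 2 := by
        gcongr
        · exact Finset.sum_nonneg fun i _ ↦ Real.rpow_nonneg
            (mul_nonneg hL.le (hlam_pos.trans_le (hlam i)).le) _
        · simpa only [Fintype.card_fin] using sum_mul_rpow_neg_le_card_mul hlam_pos hlam hL hc.1.le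
    _ = 14 * p * C * (L * lam ⟨p - 1, by omega⟩) ^ (-c) * ∏ i, S i ^ 2 := by ring
end

section
/- Let r ≥ 2 be an integer and θ ∈ (0,1) a real number. Let β₁ ≥ β₂ ≥ ⋯ ≥ β_r ≥ 0 be real numbers with β₁ > 0 and β_r ≤ β₁·θ. Then there exist an integer p with 1 ≤ p ≤ r−1 and a real number L > 0 such that L·β₁ ≤ θ^{−1}, L·β_p ≥ θ^{−1/(2r)} > 1, and L·β_{p+1} < θ^{1/(2r)}. -/
/-!
Compare `β i` with the grid value `θ ^ ((i - 1) / r) * β 1`. They agree at `i = 1`, while at `i = r`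
the bound `β r ≤ θ * β 1` puts `β r` strictly below the grid, so there is an index `p < r` with
`β p` on or above the grid and `β (p + 1)` below it. The two grid values at `p` and `p + 1` differ
by the factor `θ ^ (1 / r)`, and `L` rescales their geometric mean
`θ ^ ((p - 1 / 2) / r) * β 1` to `1`.
-/

theorem exists_le_and_succ_lt_of_le_of_lt {α : Type*} [LinearOrder α] {f g : ℕ → α} {n : ℕ}
    (hzero : g 0 ≤ f 0) (hn : f n < g n) : ∃ k < n, g k ≤ f k ∧ f (k + 1) < g (k + 1) := by
  induction n with
  | zero => exact absurd hzero hn.not_ge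
  | succ n ih =>
    rcases le_or_gt (g n) (f n) with habove | hbelow
    · exact ⟨n, n.lt_succ_self, habove, hn⟩
    · obtain ⟨k, hk, hcross⟩ := ih hbelow
      exact ⟨k, hk.trans n.lt_succ_self, hcross⟩

theorem exists_scale_inv_le_mul_and_mul_succ_lt {K : Type*} [Field K] [LinearOrder K]
    [IsStrictOrderedRing K] {u : ℕ → K} {s : K} {n : ℕ} (hs : 0 < s) (hu : 0 < u 0)
    (hn : u n < s ^ (2 * n) * u 0) :
    ∃ k < n, ∃ L > 0, L * u 0 = (s ^ (2 * k + 1))⁻¹ ∧ s⁻¹ ≤ L * u k ∧ L * u (k + 1) < s := by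
  obtain ⟨k, hkn, habove, hbelow⟩ :=
    exists_le_and_succ_lt_of_le_of_lt (f := u) (g := fun i ↦ s ^ (2 * i) * u 0) (by simp) hn
  have hmean : 0 < s ^ (2 * k + 1) * u 0 := by positivity
  refine ⟨k, hkn, (s ^ (2 * k + 1) * u 0)⁻¹, inv_pos.mpr hmean, ?_, ?_, ?_⟩
  · field_simp
  · rw [le_inv_mul_iff₀ hmean]
    calc s ^ (2 * k + 1) * u 0 * s⁻¹ = s ^ (2 * k) * u 0 := by
          rw [pow_succ]; field_simp
      _ ≤ u k := habove
  · rw [inv_mul_lt_iff₀ hmean]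
    calc u (k + 1) < s ^ (2 * (k + 1)) * u 0 := hbelow
      _ = s ^ (2 * k + 1) * u 0 * s := by ring

theorem splitting_index_and_length_general {r : ℕ} (hr : 0 < r) {θ : ℝ}
    (hθ : θ ∈ Set.Ioo (0 : ℝ) 1) {β : ℕ → ℝ} (hpos : 0 < β 1) (hlast : β r ≤ β 1 * θ) :
    ∃ (p : ℕ) (L : ℝ), 1 ≤ p ∧ p ≤ r - 1 ∧ 0 < L ∧
      L * β 1 ≤ θ ^ (-1 : ℝ) ∧
      θ ^ (-(1 : ℝ) / (2 * (r : ℝ))) ≤ L * β p ∧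
      1 < θ ^ (-(1 : ℝ) / (2 * (r : ℝ))) ∧
      L * β (p + 1) < θ ^ ((1 : ℝ) / (2 * (r : ℝ))) := by
  obtain ⟨hθ₀, hθ₁⟩ := hθ
  obtain ⟨n, rfl⟩ := Nat.exists_eq_add_one.mpr hr
  rw [Real.rpow_neg_one, neg_div, Real.rpow_neg hθ₀.le]
  set s : ℝ := θ ^ ((1 : ℝ) / (2 * ((n + 1 : ℕ) : ℝ))) with hs
  have hs₀ : 0 < s := Real.rpow_pos_of_pos hθ₀ _
  have hs₁ : s < 1 := Real.rpow_lt_one hθ₀.le hθ₁ (by positivity)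
  have hθ_eq : s ^ (2 * (n + 1)) = θ := by
    simpa [hs] using Real.rpow_inv_natCast_pow hθ₀.le (n := 2 * (n + 1)) (by omega)
  have hθ_lt_pow {m : ℕ} (hm : m < 2 * (n + 1)) : θ < s ^ m :=
    hθ_eq.symm.trans_lt (pow_lt_pow_right_of_lt_one₀ hs₀ hs₁ hm)
  have hlast_lt : β (n + 1) < s ^ (2 * n) * β 1 :=
    calc β (n + 1) ≤ θ * β 1 := hlast.trans_eq (mul_comm _ _)
      _ < s ^ (2 * n) * β 1 := mul_lt_mul_of_pos_right (hθ_lt_pow (by omega)) hpos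
  obtain ⟨k, hkn, L, hL, hfirst, habove, hbelow⟩ :=
    exists_scale_inv_le_mul_and_mul_succ_lt (u := fun i ↦ β (i + 1)) hs₀ hpos hlast_lt
  have hfirst_le : L * β 1 ≤ θ⁻¹ :=
    hfirst.trans_le (inv_anti₀ hθ₀ (hθ_lt_pow (by omega)).le)
  exact ⟨k + 1, L, by omega, by omega, hL, hfirst_le, habove, (one_lt_inv₀ hs₀).mpr hs₁, hbelow⟩

/-- Choice of splitting index `p` and averaging length `L` from the
Pigeon-Hole lemma. -/
theorem splitting_index_and_length (r : ℕ) (hr : 2 ≤ r) (θ : ℝ)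
    (hθ : θ ∈ Set.Ioo (0 : ℝ) 1)
    (β : ℕ → ℝ)
    (hnonneg : ∀ i, 1 ≤ i → i ≤ r → 0 ≤ β i)
    (hpos : 0 < β 1)
    (hmono : ∀ i, 1 ≤ i → i < r → β (i + 1) ≤ β i)
    (hlast : β r ≤ β 1 * θ) :
    ∃ (p : ℕ) (L : ℝ), 1 ≤ p ∧ p ≤ r - 1 ∧ 0 < L ∧
      L * β 1 ≤ θ ^ (-1 : ℝ) ∧
      θ ^ (-(1 : ℝ) / (2 * (r : ℝ))) ≤ L * β p ∧
      1 < θ ^ (-(1 : ℝ) / (2 * (r : ℝ))) ∧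
      L * β (p + 1) < θ ^ ((1 : ℝ) / (2 * (r : ℝ))) :=
  splitting_index_and_length_general (Nat.zero_lt_of_lt hr) hθ hpos hlast
end

section
/- For every real number R ≥ 1 and every c ∈ (0,1): (1/R²)·∫₀^R ∫₀^R max(1, |u − v|)^{−c} du dv ≤ 7·R^{−c}/(1 − c). -/
/-!
Away from the diagonal, `max(1, |u - v|)^{-c} ≤ |u - v|^{-c}`, and the right-hand side can be
integrated exactly: on `[0, R]` the inner integral is `(u^{1-c} + (R-u)^{1-c})/(1-c)`, and the
double integral is `2R^{2-c}/((1-c)(2-c))`. As `2 - c ≥ 1`, even the constant `2` would do in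
place of `7`.
-/

open MeasureTheory

section RieszKernel

variable {a b m r u : ℝ}

lemma intervalIntegrable_abs_rpow (hr : -1 < r) :
    IntervalIntegrable (fun t : ℝ => |t| ^ r) volume a b := by
  refine intervalIntegrable_of_even (fun t => by rw [abs_neg]) fun x hx => ?_
  refine (intervalIntegral.intervalIntegrable_rpow' hr).congr fun t ht => ?_
  rw [Set.uIoc_of_le hx.le] at ht
  simp only [abs_of_pos ht.1]

lemma intervalIntegrable_abs_sub_rpow (hr : -1 < r) :
    IntervalIntegrable (fun v => |u - v| ^ r) volume a b := by
  simpa only [sub_sub_cancel] using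
    (intervalIntegrable_abs_rpow (a := u - a) (b := u - b) hr).comp_sub_left u

lemma integral_zero_rpow (hr : -1 < r) : ∫ t in (0 : ℝ)..b, t ^ r = b ^ (r + 1) / (r + 1) := by
  rw [integral_rpow (Or.inl hr), Real.zero_rpow (by linarith), sub_zero]

lemma integral_abs_rpow_of_nonneg (hr : -1 < r) (hb : 0 ≤ b) :
    ∫ t in (0 : ℝ)..b, |t| ^ r = b ^ (r + 1) / (r + 1) := by
  calc ∫ t in (0 : ℝ)..b, |t| ^ r = ∫ t in (0 : ℝ)..b, t ^ r := by
        refine intervalIntegral.integral_congr fun t ht => ?_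
        rw [Set.uIcc_of_le hb] at ht
        simp only [abs_of_nonneg ht.1]
    _ = b ^ (r + 1) / (r + 1) := integral_zero_rpow hr

lemma integral_abs_sub_rpow (hr : -1 < r) (hau : a ≤ u) (hub : u ≤ b) :
    ∫ v in a..b, |u - v| ^ r = ((u - a) ^ (r + 1) + (b - u) ^ (r + 1)) / (r + 1) := by
  have hleft : ∫ v in a..u, |u - v| ^ r = (u - a) ^ (r + 1) / (r + 1) := by
    rw [intervalIntegral.integral_comp_sub_left (fun t => |t| ^ r) u, sub_self,
      integral_abs_rpow_of_nonneg hr (sub_nonneg.2 hau)]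
  have hright : ∫ v in u..b, |u - v| ^ r = (b - u) ^ (r + 1) / (r + 1) := by
    simp_rw [abs_sub_comm u]
    rw [intervalIntegral.integral_comp_sub_right (fun t => |t| ^ r) u, sub_self,
      integral_abs_rpow_of_nonneg hr (sub_nonneg.2 hub)]
  rw [← intervalIntegral.integral_add_adjacent_intervals
    (intervalIntegrable_abs_sub_rpow hr) (intervalIntegrable_abs_sub_rpow hr), hleft, hright,
    add_div]

lemma integral_sub_rpow_add_sub_rpow (hr : -1 < r) :
    ∫ u in a..b, ((u - a) ^ r + (b - u) ^ r) = 2 * (b - a) ^ (r + 1) / (r + 1) := by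
  have hint {x y : ℝ} : IntervalIntegrable (fun t : ℝ => t ^ r) volume x y :=
    intervalIntegral.intervalIntegrable_rpow' hr
  rw [intervalIntegral.integral_add
      (by simpa only [sub_add_cancel] using (hint (x := a - a) (y := b - a)).comp_sub_right a)
      (by simpa only [sub_sub_cancel] using (hint (x := b - a) (y := b - b)).comp_sub_left b),
    intervalIntegral.integral_comp_sub_right (fun t => t ^ r) a,
    intervalIntegral.integral_comp_sub_left (fun t => t ^ r) b, sub_self, sub_self,
    integral_zero_rpow hr]
  ring

lemma continuous_max_abs_sub_rpow (hm : 0 < m) :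
    Continuous fun p : ℝ × ℝ => max m |p.1 - p.2| ^ r :=
  (continuous_const.max (continuous_fst.sub continuous_snd).abs).rpow_const fun _ =>
    Or.inl (hm.trans_le (le_max_left _ _)).ne'

lemma integral_max_abs_sub_rpow_le (hm : 0 < m) (hr : -1 < r) (hr0 : r ≤ 0) (hau : a ≤ u)
    (hub : u ≤ b) :
    ∫ v in a..b, max m |u - v| ^ r ≤ ((u - a) ^ (r + 1) + (b - u) ^ (r + 1)) / (r + 1) := by
  rw [← integral_abs_sub_rpow hr hau hub]
  refine intervalIntegral.integral_mono_ae (hau.trans hub)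
    (((continuous_max_abs_sub_rpow hm).comp (Continuous.prodMk_right u)).intervalIntegrable a b)
    (intervalIntegrable_abs_sub_rpow hr) ?_
  -- On the diagonal the comparison fails, because `0 ^ r = 0` by convention when `r < 0`.
  filter_upwards [volume.ae_ne u] with v hv
  exact Real.rpow_le_rpow_of_nonpos (abs_pos.2 (sub_ne_zero.2 hv.symm)) (le_max_right _ _) hr0

lemma integral_integral_max_abs_sub_rpow_le (hm : 0 < m) (hr : -1 < r) (hr0 : r ≤ 0)
    (hab : a ≤ b) :
    ∫ u in a..b, ∫ v in a..b, max m |u - v| ^ r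
      ≤ 2 * (b - a) ^ (r + 2) / ((r + 1) * (r + 2)) := by
  have hinner : Continuous fun u => ∫ v in a..b, max m |u - v| ^ r :=
    intervalIntegral.continuous_parametric_intervalIntegral_of_continuous'
      (continuous_max_abs_sub_rpow hm) a b
  have hbound : Continuous fun u => ((u - a) ^ (r + 1) + (b - u) ^ (r + 1)) / (r + 1) := by
    have hr1 : 0 ≤ r + 1 := by linarith
    exact (((continuous_id.sub continuous_const).rpow_const fun _ => Or.inr hr1).add
      ((continuous_const.sub continuous_id).rpow_const fun _ => Or.inr hr1)).div_const _
  calc ∫ u in a..b, ∫ v in a..b, max m |u - v| ^ r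
      ≤ ∫ u in a..b, ((u - a) ^ (r + 1) + (b - u) ^ (r + 1)) / (r + 1) :=
        intervalIntegral.integral_mono_on hab (hinner.intervalIntegrable a b)
          (hbound.intervalIntegrable a b) fun u hu =>
            integral_max_abs_sub_rpow_le hm hr hr0 hu.1 hu.2
    _ = 2 * (b - a) ^ (r + 2) / ((r + 1) * (r + 2)) := by
        rw [intervalIntegral.integral_div, integral_sub_rpow_add_sub_rpow (by linarith),
          div_div, mul_comm (r + 1 + 1), add_assoc r, one_add_one_eq_two]

end RieszKernel

theorem double_integral_estimate_general {R c : ℝ} (hR : 0 < R) (hc0 : 0 ≤ c) (hc1 : c < 1) :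
    (1 / R ^ 2) * ∫ u in (0 : ℝ)..R, ∫ v in (0 : ℝ)..R, max 1 |u - v| ^ (-c)
      ≤ 2 * R ^ (-c) / ((1 - c) * (2 - c)) := by
  have henergy := integral_integral_max_abs_sub_rpow_le one_pos (neg_lt_neg hc1)
    (neg_nonpos.2 hc0) hR.le
  calc (1 / R ^ 2) * ∫ u in (0 : ℝ)..R, ∫ v in (0 : ℝ)..R, max 1 |u - v| ^ (-c)
      ≤ (1 / R ^ 2) * (2 * (R - 0) ^ (-c + 2) / ((-c + 1) * (-c + 2))) := by gcongr
    _ = 2 * R ^ (-c) / ((1 - c) * (2 - c)) := by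
        rw [sub_zero, Real.rpow_add hR, Real.rpow_two, neg_add_eq_sub, neg_add_eq_sub]
        field_simp

/-- The integral estimate
`(1/R²)∫₀^R∫₀^R max(1,|u−v|)^{−c} du dv ≤ 7 R^{−c}/(1−c)`. -/
theorem double_integral_estimate (R : ℝ) (hR : 1 ≤ R) (c : ℝ)
    (hc : c ∈ Set.Ioo (0 : ℝ) 1) :
    (1 / R ^ 2) * ∫ u in (0 : ℝ)..R, ∫ v in (0 : ℝ)..R, max 1 |u - v| ^ (-c)
      ≤ 7 * R ^ (-c) / (1 - c) := by
  have hR0 : 0 < R := one_pos.trans_le hR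
  have h1c : 0 < 1 - c := sub_pos.2 hc.2
  refine (double_integral_estimate_general hR0 hc.1.le hc.2).trans ?_
  gcongr
  · norm_num
  · exact le_mul_of_one_le_right h1c.le (by linarith)
end

section
/- Let c₁ ∈ (0,1], ℓ ≥ 1 and d₀ ≥ 1 be real numbers, and let δ : ℕ → ℝ satisfy δ(1) ∈ (0,1] and, for all integers r ≥ 2, δ(r) = c₁·δ(r−1)/(2c₁ + 2ℓ(r+1)d₀r²). Then there exists a real number λ > 1 such that δ(r) ≥ 1/((r!)²·(r+1)!·λ^r) for every integer r ≥ 1. -/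
/-!
The recursion says `δ (r - 1) = q r * δ r`, where `q r = (2c₁ + 2ℓd₀(r+1)r²) / c₁` is at most
`λ(r+1)r²` as soon as `λ ≥ 2 + 2ℓd₀/c₁`. Since `λ(r+1)r²` is the ratio of consecutive terms of
`W r = (r!)²(r+1)!λ^r`, the product `W r * δ r` is nondecreasing, and it starts at
`W 1 * δ 1 = 2λ * δ 1`, which is at least `1` when `λ ≥ 1 / (2 * δ 1)`.
-/

section FactorialWeight

variable {R : Type*} [CommSemiring R]

/-- The weight `(r!)²(r+1)!λ^r`, whose reciprocal is the claimed lower bound for `δ_r`. -/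
def factorialWeight (lam : R) (r : ℕ) : R :=
  (r.factorial : R) ^ 2 * ((r + 1).factorial : R) * lam ^ r

theorem factorialWeight_one (lam : R) : factorialWeight lam 1 = 2 * lam := by
  simp [factorialWeight]

theorem factorialWeight_succ (lam : R) (n : ℕ) :
    factorialWeight lam (n + 1) =
      factorialWeight lam n * (lam * (((n + 1 : ℕ) + 1) * ((n + 1 : ℕ) : R) ^ 2)) := by
  simp only [factorialWeight, Nat.factorial_succ]
  push_cast
  ring

variable [PartialOrder R] [IsStrictOrderedRing R]

theorem factorialWeight_pos {lam : R} (hlam : 0 < lam) (r : ℕ) : 0 < factorialWeight lam r := by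
  unfold factorialWeight
  positivity

theorem monotoneOn_factorialWeight_mul {lam : R} (hlam : 0 < lam) {δ : ℕ → R} {m : ℕ}
    (hδ : ∀ n, m ≤ n →
      δ n ≤ lam * (((n + 1 : ℕ) + 1) * ((n + 1 : ℕ) : R) ^ 2) * δ (n + 1)) :
    MonotoneOn (fun r ↦ factorialWeight lam r * δ r) (Set.Ici m) := by
  refine monotoneOn_nat_Ici_of_le_succ fun n hn ↦ ?_
  rw [factorialWeight_succ, mul_assoc]
  exact mul_le_mul_of_nonneg_left (hδ n hn) (factorialWeight_pos hlam n).le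

end FactorialWeight

section Recursion

variable {K : Type*} [Field K] [LinearOrder K] [IsStrictOrderedRing K] {c₁ ℓ d₀ lam s : K}

theorem recursion_denom_pos (hc₁ : 0 < c₁) (hℓd₀ : 0 ≤ ℓ * d₀) (hs : 0 ≤ s) :
    0 < 2 * c₁ + 2 * ℓ * (s + 1) * d₀ * s ^ 2 := by
  have hnonneg : 0 ≤ ℓ * d₀ * ((s + 1) * s ^ 2) := by positivity
  linarith

theorem recursion_denom_le (hc₁ : 0 ≤ c₁) (hlam : 2 * c₁ + 2 * (ℓ * d₀) ≤ c₁ * lam) (hs : 1 ≤ s) :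
    2 * c₁ + 2 * ℓ * (s + 1) * d₀ * s ^ 2 ≤ c₁ * (lam * ((s + 1) * s ^ 2)) := by
  have hone : 1 ≤ (s + 1) * s ^ 2 :=
    one_le_mul_of_one_le_of_one_le (by linarith) (one_le_pow₀ hs)
  calc 2 * c₁ + 2 * ℓ * (s + 1) * d₀ * s ^ 2
      = 2 * c₁ * 1 + 2 * (ℓ * d₀) * ((s + 1) * s ^ 2) := by ring
    _ ≤ 2 * c₁ * ((s + 1) * s ^ 2) + 2 * (ℓ * d₀) * ((s + 1) * s ^ 2) := by gcongr
    _ = (2 * c₁ + 2 * (ℓ * d₀)) * ((s + 1) * s ^ 2) := by ring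
    _ ≤ c₁ * lam * ((s + 1) * s ^ 2) := by gcongr
    _ = c₁ * (lam * ((s + 1) * s ^ 2)) := mul_assoc _ _ _

theorem le_mul_recursion_step (hc₁ : 0 < c₁) (hℓd₀ : 0 ≤ ℓ * d₀)
    (hlam : 2 * c₁ + 2 * (ℓ * d₀) ≤ c₁ * lam) (hs : 1 ≤ s) {x : K} (hx : 0 ≤ x) :
    x ≤ lam * ((s + 1) * s ^ 2) * (c₁ * x / (2 * c₁ + 2 * ℓ * (s + 1) * d₀ * s ^ 2)) := by
  rw [← mul_div_assoc, le_div_iff₀ (recursion_denom_pos hc₁ hℓd₀ (zero_le_one.trans hs))]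
  calc x * (2 * c₁ + 2 * ℓ * (s + 1) * d₀ * s ^ 2)
      ≤ x * (c₁ * (lam * ((s + 1) * s ^ 2))) := by gcongr; exact recursion_denom_le hc₁.le hlam hs
    _ = lam * ((s + 1) * s ^ 2) * (c₁ * x) := by ring

theorem recursion_pos (hc₁ : 0 < c₁) (hℓd₀ : 0 ≤ ℓ * d₀) {δ : ℕ → K} (hδ1 : 0 < δ 1)
    (hrec : ∀ r : ℕ, 2 ≤ r →
      δ r = c₁ * δ (r - 1) / (2 * c₁ + 2 * ℓ * ((r : K) + 1) * d₀ * (r : K) ^ 2))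
    {r : ℕ} (hr : 1 ≤ r) : 0 < δ r := by
  induction r, hr using Nat.le_induction with
  | base => exact hδ1
  | succ n hn ih =>
    rw [hrec (n + 1) (by lia), Nat.add_sub_cancel]
    exact div_pos (mul_pos hc₁ ih) (recursion_denom_pos hc₁ hℓd₀ (Nat.cast_nonneg _))

theorem one_le_factorialWeight_mul (hc₁ : 0 < c₁) (hℓd₀ : 0 ≤ ℓ * d₀) {δ : ℕ → K}
    (hrec : ∀ r : ℕ, 2 ≤ r →
      δ r = c₁ * δ (r - 1) / (2 * c₁ + 2 * ℓ * ((r : K) + 1) * d₀ * (r : K) ^ 2))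
    (hlam : 2 * c₁ + 2 * (ℓ * d₀) ≤ c₁ * lam) (hlam_init : 1 ≤ 2 * lam * δ 1)
    {r : ℕ} (hr : 1 ≤ r) : 1 ≤ factorialWeight lam r * δ r := by
  have hlam_pos : 0 < lam := pos_of_mul_pos_right (by linarith : 0 < c₁ * lam) hc₁.le
  have hδ1 : 0 < δ 1 := pos_of_mul_pos_right (zero_lt_one.trans_le hlam_init) (by positivity)
  have hstep : ∀ n, 1 ≤ n →
      δ n ≤ lam * (((n + 1 : ℕ) + 1) * ((n + 1 : ℕ) : K) ^ 2) * δ (n + 1) := by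
    intro n hn
    rw [hrec (n + 1) (by lia), Nat.add_sub_cancel]
    exact le_mul_recursion_step hc₁ hℓd₀ hlam (by exact_mod_cast Nat.le_add_left 1 n)
      (recursion_pos hc₁ hℓd₀ hδ1 hrec hn).le
  calc 1 ≤ factorialWeight lam 1 * δ 1 := by rwa [factorialWeight_one]
    _ ≤ factorialWeight lam r * δ r :=
      monotoneOn_factorialWeight_mul hlam_pos hstep Set.self_mem_Ici hr hr

theorem delta_recursion_lower_bound_general (hc₁ : 0 < c₁) (hℓd₀ : 0 ≤ ℓ * d₀) {δ : ℕ → K}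
    (hδ1 : 0 < δ 1)
    (hrec : ∀ r : ℕ, 2 ≤ r →
      δ r = c₁ * δ (r - 1) / (2 * c₁ + 2 * ℓ * ((r : K) + 1) * d₀ * (r : K) ^ 2)) :
    ∃ lam : K, 1 < lam ∧ ∀ r : ℕ, 1 ≤ r →
      1 / ((r.factorial : K) ^ 2 * ((r + 1).factorial : K) * lam ^ r) ≤ δ r := by
  obtain ⟨lam, hlam, hlam_init⟩ : ∃ lam, 2 + 2 * (ℓ * d₀) / c₁ ≤ lam ∧ 1 / (2 * δ 1) ≤ lam :=
    ⟨_, le_max_left _ _, le_max_right _ _⟩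
  have hone_lt : 1 < lam := by
    have hquot : 0 ≤ 2 * (ℓ * d₀) / c₁ := by positivity
    linarith
  have hc₁lam : 2 * c₁ + 2 * (ℓ * d₀) ≤ c₁ * lam := by
    calc 2 * c₁ + 2 * (ℓ * d₀) = c₁ * (2 + 2 * (ℓ * d₀) / c₁) := by field_simp
      _ ≤ c₁ * lam := by gcongr
  have hinit : 1 ≤ 2 * lam * δ 1 := by
    rw [div_le_iff₀ (by positivity)] at hlam_init
    linarith
  refine ⟨lam, hone_lt, fun r hr ↦ ?_⟩
  change 1 / factorialWeight lam r ≤ δ r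
  rw [div_le_iff₀' (factorialWeight_pos (zero_lt_one.trans hone_lt) r)]
  exact one_le_factorialWeight_mul hc₁ hℓd₀ hrec hc₁lam hinit hr

end Recursion

/-- Explicit lower bound `δ_r ≥ 1/((r!)²(r+1)!λ^r)` for the exponents produced
by the recursion `δ_r = c₁ δ_{r−1}/(2c₁ + 2ℓ(r+1)d₀r²)`. -/
theorem delta_recursion_lower_bound (c₁ ℓ d₀ : ℝ)
    (hc₁ : c₁ ∈ Set.Ioc (0 : ℝ) 1) (hℓ : 1 ≤ ℓ) (hd₀ : 1 ≤ d₀)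
    (δ : ℕ → ℝ) (hδ1 : δ 1 ∈ Set.Ioc (0 : ℝ) 1)
    (hrec : ∀ r : ℕ, 2 ≤ r →
      δ r = c₁ * δ (r - 1) / (2 * c₁ + 2 * ℓ * ((r : ℝ) + 1) * d₀ * (r : ℝ) ^ 2)) :
    ∃ lam : ℝ, 1 < lam ∧ ∀ r : ℕ, 1 ≤ r →
      1 / (((r.factorial : ℝ)) ^ 2 * ((r + 1).factorial : ℝ) * lam ^ r) ≤ δ r :=
  delta_recursion_lower_bound_general hc₁.1
    (mul_nonneg (zero_le_one.trans hℓ) (zero_le_one.trans hd₀)) hδ1.1 hrec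
end
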